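/- Let R be a commutative ring and M an invertible R-module, i.e., a finitely generated projective R-module whose localization at every prime ideal of R is free of rank 1. Let f, g ∈ M be two elements that generate M, i.e., the R-submodule of M spanned by {f, g} is all of M. Then the sequence 0 → Hom_R(M, R) → R × R → M → 0 is a short exact sequence of R-modules, where the first map sends φ to (φ f, φ g) and the second map sends (a, b) to a • g − b • f. In particular, the cokernel of the map Hom_R(M, R) → R × R, φ ↦ (φ f, φ g), is isomorphic as an R-module to M. -/

import Mathlib

/-- An *invertible module* over a commutative ring `R`: a finitely generated projective
`R`-module whose localization at every prime ideal of `R` is free of rank 1. -/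
def IsInvertibleModule (R : Type*) [CommRing R] (M : Type*) [AddCommGroup M]
    [Module R M] : Prop :=
  Module.Finite R M ∧ Module.Projective R M ∧
    ∀ (p : Ideal R) [p.IsPrime],
      Module.Free (Localization.AtPrime p) (LocalizedModule p.primeCompl M) ∧
      Module.finrank (Localization.AtPrime p) (LocalizedModule p.primeCompl M) = 1

/-- The `R`-linear map `Hom_R(M, R) → R × R`, `φ ↦ (φ f, φ g)`. -/
def evalPair (R : Type*) [CommRing R] (M : Type*) [AddCommGroup M] [Module R M]
    (f g : M) : (M →ₗ[R] R) →ₗ[R] R × R :=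
  LinearMap.prod (LinearMap.applyₗ f) (LinearMap.applyₗ g)

/-- The `R`-linear map `R × R → M`, `(a, b) ↦ a • g - b • f`. -/
def diffPair (R : Type*) [CommRing R] (M : Type*) [AddCommGroup M] [Module R M]
    (f g : M) : R × R →ₗ[R] M :=
  (LinearMap.toSpanSingleton R M g).coprod (-(LinearMap.toSpanSingleton R M f))

namespace IsInvertibleModule

variable {R : Type*} [CommRing R] {M : Type*} [AddCommGroup M] [Module R M]

theorem nonempty_linearEquiv_localization (hM : IsInvertibleModule R M) (p : Ideal R)
    [p.IsPrime] :
    Nonempty (LocalizedModule p.primeCompl M ≃ₗ[Localization.AtPrime p]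
      Localization.AtPrime p) := by
  obtain ⟨hfree, hrank⟩ := hM.2.2 p
  exact ⟨(Module.nonempty_linearEquiv_of_finrank_eq_one hrank).some.symm⟩

theorem dual_smul_comm (hM : IsInvertibleModule R M) (φ : M →ₗ[R] R) (x y : M) :
    φ x • y = φ y • x := by
  refine Module.eq_of_localization_maximal
    (fun (P : Ideal R) _ ↦ LocalizedModule P.primeCompl M)
    (fun (P : Ideal R) _ ↦ LocalizedModule.mkLinearMap P.primeCompl M) _ _ fun P _ ↦ ?_
  obtain ⟨e⟩ := hM.nonempty_linearEquiv_localization P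
  let ι := LocalizedModule.mkLinearMap P.primeCompl M
  let ψ := IsLocalizedModule.mapExtendScalars P.primeCompl ι
    (Algebra.linearMap R (Localization.AtPrime P)) (Localization.AtPrime P) φ
  have hψ (z : M) : algebraMap R (Localization.AtPrime P) (φ z) = e (ι z) * ψ (e.symm 1) := by
    rw [← smul_eq_mul, ← map_smul, ← map_smul, smul_eq_mul, mul_one, e.symm_apply_apply]
    exact (IsLocalizedModule.map_apply P.primeCompl ι
      (Algebra.linearMap R (Localization.AtPrime P)) φ z).symm
  have he (r : R) (z : M) :
      e (ι (r • z)) = algebraMap R (Localization.AtPrime P) r * e (ι z) := by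
    rw [map_smul, ← algebraMap_smul (Localization.AtPrime P) r (ι z), map_smul, smul_eq_mul]
  apply e.injective
  change e (ι _) = e (ι _)
  rw [he, he, hψ, hψ]
  ring

theorem eq_zero_of_forall_smul_eq_zero (hM : IsInvertibleModule R M) {r : R}
    (hr : ∀ x : M, r • x = 0) : r = 0 := by
  refine eq_zero_of_localization r fun P _ ↦ ?_
  obtain ⟨e⟩ := hM.nonempty_linearEquiv_localization P
  have h : r • e.symm 1 = 0 := by
    induction e.symm 1 using LocalizedModule.induction_on with
    | _ x s => rw [LocalizedModule.smul'_mk, hr, LocalizedModule.zero_mk]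
  rw [← algebraMap_smul (Localization.AtPrime P), ← map_smul, smul_eq_mul, mul_one] at h
  exact e.symm.map_eq_zero_iff.mp h

end IsInvertibleModule

section PairOfGenerators

variable {R : Type*} [CommRing R] {M : Type*} [AddCommGroup M] [Module R M] {f g : M}

@[simp]
theorem evalPair_apply (φ : M →ₗ[R] R) : evalPair R M f g φ = (φ f, φ g) := rfl

@[simp]
theorem diffPair_apply (c : R × R) : diffPair R M f g c = c.1 • g - c.2 • f := by
  simp [diffPair, sub_eq_add_neg]

theorem evalPair_injective (hfg : Submodule.span R ({f, g} : Set M) = ⊤) :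
    Function.Injective (evalPair R M f g) := by
  intro φ ψ h
  rw [evalPair_apply, evalPair_apply, Prod.mk.injEq] at h
  refine LinearMap.ext_on hfg ?_
  rintro x (rfl | rfl)
  exacts [h.1, h.2]

theorem diffPair_surjective (hfg : Submodule.span R ({f, g} : Set M) = ⊤) :
    Function.Surjective (diffPair R M f g) := by
  intro x
  obtain ⟨a, b, rfl⟩ := Submodule.mem_span_pair.mp (hfg ▸ Submodule.mem_top : x ∈ _)
  exact ⟨(b, -a), by simp [add_comm]⟩

theorem range_evalPair_eq_ker_diffPair (hM : IsInvertibleModule R M)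
    (hfg : Submodule.span R ({f, g} : Set M) = ⊤) :
    LinearMap.range (evalPair R M f g) = LinearMap.ker (diffPair R M f g) := by
  apply le_antisymm
  · rintro _ ⟨φ, rfl⟩
    simp [hM.dual_smul_comm φ f g]
  · rintro ⟨a, b⟩ hab
    replace hab : a • g = b • f := by simpa [sub_eq_zero] using hab
    have := hM.2.1
    obtain ⟨s, hs⟩ := Module.projective_lifting_property (diffPair R M f g) .id
      (diffPair_surjective hfg)
    let β : M →ₗ[R] R := LinearMap.fst R R R ∘ₗ s
    let α : M →ₗ[R] R := -(LinearMap.snd R R R ∘ₗ s)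
    have decomp (x : M) : α x • f + β x • g = x := by
      simpa [α, β, sub_eq_neg_add] using LinearMap.congr_fun hs x
    -- The trace of the identity of `M`, expressed through the generators, is `1`.
    have trace : α f + β g = 1 := by
      refine sub_eq_zero.mp (hM.eq_zero_of_forall_smul_eq_zero fun x ↦ ?_)
      rw [sub_smul, add_smul, one_smul, hM.dual_smul_comm α, hM.dual_smul_comm β, decomp,
        sub_self]
    have hα : a * α g = b * α f := by simpa using congrArg α hab
    have hβ : a * β g = b * β f := by simpa using congrArg β hab
    refine ⟨a • α + b • β, Prod.ext ?_ ?_⟩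
    · simp only [evalPair_apply, LinearMap.add_apply, LinearMap.smul_apply, smul_eq_mul]
      linear_combination a * trace - hβ
    · simp only [evalPair_apply, LinearMap.add_apply, LinearMap.smul_apply, smul_eq_mul]
      linear_combination b * trace + hα

end PairOfGenerators

/-- Let `R` be a commutative ring and `M` an invertible `R`-module.
If `f, g ∈ M` generate `M`, then `0 → Hom_R(M,R) → R × R → M → 0` is a short exact
sequence, where the first map is `φ ↦ (φ f, φ g)` and the second is `(a,b) ↦ a • g - b • f`.
In particular the cokernel of the first map is isomorphic to `M`. -/
theorem invertibleModule_shortExact (R : Type*) [CommRing R] (M : Type*) [AddCommGroup M]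
    [Module R M] (hM : IsInvertibleModule R M) (f g : M)
    (hfg : Submodule.span R ({f, g} : Set M) = ⊤) :
    Function.Injective (evalPair R M f g) ∧
    LinearMap.range (evalPair R M f g) = LinearMap.ker (diffPair R M f g) ∧
    Function.Surjective (diffPair R M f g) ∧
    Nonempty (((R × R) ⧸ LinearMap.range (evalPair R M f g)) ≃ₗ[R] M) := by
  have hexact := range_evalPair_eq_ker_diffPair hM hfg
  have hsurj := diffPair_surjective hfg
  exact ⟨evalPair_injective hfg, hexact, hsurj,
    ⟨(Submodule.quotEquivOfEq _ _ hexact).trans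
      ((diffPair R M f g).quotKerEquivOfSurjective hsurj)⟩⟩
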